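/- Let X be a finite m-almost quasigroup quandle such that for each a ∈ X the stabilizer S_a is a trivial subquandle of X. For 1 ≤ j ≤ n define D_n^j : C_n^R(X) → C_{n+1}^R(X) on generators x = (x_1,…,x_n) by D_n^j(x) = Σ_{k=1}^m Σ_{y∈X} (x_j^{(k)},…,x_j^{(k)}, y, x_{j+1},…,x_n), where the first j entries equal x_j^{(k)}. Then ∂_{n+1}∘D_n^j + D_{n−1}^j∘∂_n = (−1)^{j+1}(|X|·g_2^j − m·g_s^j) as maps C_n^R(X) → C_n^R(X). -/

import Mathlib

/-- The `n`-th rack chain group: the free abelian group on `n`-tuples of `X`. -/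
abbrev RackChain (X : Type) (n : ℕ) : Type := FreeAbelianGroup (Fin n → X)

/-- The face map `d_i^{(*_0)}` deleting the `i`-th entry (0-indexed). -/
def dZero {X : Type} (n : ℕ) (i : Fin (n + 1)) (x : Fin (n + 1) → X) :
    Fin n → X :=
  fun j => if (j : ℕ) < (i : ℕ) then x j.castSucc else x j.succ

/-- The face map `d_i^{(*)}`: entries before position `i` are acted on by `x i`
and the `i`-th entry is deleted (0-indexed). -/
def dStar {X : Type} (op : X → X → X) (n : ℕ) (i : Fin (n + 1))
    (x : Fin (n + 1) → X) : Fin n → X :=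
  fun j => if (j : ℕ) < (i : ℕ) then op (x j.castSucc) (x i) else x j.succ

/-- The rack boundary `∂_{n+1} : C_{n+1}^R(X) → C_n^R(X)`,
`∂(x) = Σ_{i=1}^{n+1} (-1)^i (d_i^{(*_0)} x - d_i^{(*)} x)` (with `i` 1-based). -/
def rackBoundary {X : Type} (op : X → X → X) (n : ℕ) :
    RackChain X (n + 1) →+ RackChain X n :=
  FreeAbelianGroup.lift fun x =>
    ∑ i : Fin (n + 1), ((-1 : ℤ) ^ ((i : ℕ) + 1)) •
      (FreeAbelianGroup.of (dZero n i x) - FreeAbelianGroup.of (dStar op n i x))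

/-- The group of rack `(n+1)`-cycles. -/
def rackCycles {X : Type} (op : X → X → X) (n : ℕ) :
    AddSubgroup (RackChain X (n + 1)) :=
  (rackBoundary op n).ker

/-- The group of rack `(n+1)`-boundaries, viewed inside the cycles. -/
def rackBoundaries {X : Type} (op : X → X → X) (n : ℕ) :
    AddSubgroup (rackCycles op n) :=
  ((rackBoundary op (n + 1)).range).addSubgroupOf (rackCycles op n)

/-- The `(n+1)`-st rack homology group `H_{n+1}^R(X)` (so `n = 0` gives `H_1`). -/
def rackHomology {X : Type} (op : X → X → X) (n : ℕ) : Type :=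
  rackCycles (X := X) op n ⧸ rackBoundaries op n

instance {X : Type} (op : X → X → X) (n : ℕ) :
    AddCommGroup (rackHomology op n) :=
  QuotientAddGroup.Quotient.addCommGroup _
/-- The stabilizer `S_a = {x | a * x = a}` as a finset. -/
def stabF {X : Type} [Fintype X] [DecidableEq X] (op : X → X → X) (a : X) :
    Finset X :=
  Finset.univ.filter fun y => op a y = a

/-- The chain map `g_1^j` (`j` is 1-based, `1 ≤ j ≤ n`; zero otherwise):
`g_1^j(x) = Σ_{k ∈ S_{x_j}} (k, …, k, x_j, x_{j+1}, …, x_n)`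
(the first `j-1` entries equal `k`). -/
def g1map {X : Type} [Fintype X] [DecidableEq X] (op : X → X → X) (n j : ℕ) :
    RackChain X n →+ RackChain X n :=
  FreeAbelianGroup.lift fun x =>
    if h : 1 ≤ j ∧ j ≤ n then
      ∑ k ∈ stabF op (x ⟨j - 1, by omega⟩),
        FreeAbelianGroup.of (fun i : Fin n => if (i : ℕ) < j - 1 then k else x i)
    else 0

/-- The chain map `g_2^j` (`j` is 1-based, `1 ≤ j ≤ n`; zero otherwise):
`g_2^j(x) = Σ_{k ∈ S_{x_j}} (k, …, k, x_{j+1}, …, x_n)`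
(the first `j` entries equal `k`). -/
def g2map {X : Type} [Fintype X] [DecidableEq X] (op : X → X → X) (n j : ℕ) :
    RackChain X n →+ RackChain X n :=
  FreeAbelianGroup.lift fun x =>
    if h : 1 ≤ j ∧ j ≤ n then
      ∑ k ∈ stabF op (x ⟨j - 1, by omega⟩),
        FreeAbelianGroup.of (fun i : Fin n => if (i : ℕ) < j then k else x i)
    else 0

/-- The chain map `g_0^j` (`j` is 1-based, `1 ≤ j ≤ n`; zero otherwise):
`g_0^j(x) = Σ_{k ∈ S_{x_j}} (x_j, …, x_j, k, x_{j+1}, …, x_n)`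
(the first `j-1` entries equal `x_j`, the `j`-th entry is `k`). -/
def g0map {X : Type} [Fintype X] [DecidableEq X] (op : X → X → X) (n j : ℕ) :
    RackChain X n →+ RackChain X n :=
  FreeAbelianGroup.lift fun x =>
    if h : 1 ≤ j ∧ j ≤ n then
      ∑ k ∈ stabF op (x ⟨j - 1, by omega⟩),
        FreeAbelianGroup.of (fun i : Fin n =>
          if (i : ℕ) < j - 1 then x ⟨j - 1, by omega⟩
          else if (i : ℕ) = j - 1 then k else x i)
    else 0

/-- The symmetrizer chain map `g_s^j` (`j` is 1-based):
`g_s^j(x) = Σ_{y ∈ X} (y, …, y, x_{j+1}, …, x_n)` (the first `j` entries equal `y`). -/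
def gsmap {X : Type} [Fintype X] [DecidableEq X] (op : X → X → X) (n j : ℕ) :
    RackChain X n →+ RackChain X n :=
  FreeAbelianGroup.lift fun x =>
    ∑ y : X, FreeAbelianGroup.of (fun i : Fin n => if (i : ℕ) < j then y else x i)

/-- The chain homotopy `D_n^j` (`j` 1-based, `1 ≤ j ≤ n`; zero otherwise):
`D_n^j(x) = Σ_{k ∈ S_{x_j}} Σ_{y ∈ X} (k, …, k, y, x_{j+1}, …, x_n)`
(the first `j` entries equal `k`, then `y`). -/
def Dmap {X : Type} [Fintype X] [DecidableEq X] (op : X → X → X) (n j : ℕ) :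
    RackChain X n →+ RackChain X (n + 1) :=
  FreeAbelianGroup.lift fun x =>
    if h : 1 ≤ j ∧ j ≤ n then
      ∑ k ∈ stabF op (x ⟨j - 1, by omega⟩), ∑ y : X,
        FreeAbelianGroup.of (fun i : Fin (n + 1) =>
          if (i : ℕ) < j then k
          else if (i : ℕ) = j then y
          else x ⟨(i : ℕ) - 1, by have := i.isLt; omega⟩)
    else 0

/-!
Write `∂ = Σᵢ (-1)ⁱ⁺¹ (dᵢ⁰ - dᵢ*)` with positions counted from `0`, and compare the two faces `dᵢ⁰`,
`dᵢ*` of a tuple `(k, …, k, y, x_{j+1}, …, x_n)` starting with `j` copies of `k`. For `i < j` they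
coincide because `k * k = k`. For `i > j` they are again tuples of this shape, built from the faces
of `x`, since translation by the deleted entry is an automorphism; these terms cancel against
`D ∘ ∂`. Only `i = j` survives: `dⱼ⁰` forgets `y`, giving `|X| • g₂`, while `dⱼ*` replaces each `k`
by `k * y`. As `S_k = S_{x_j}` for `k ∈ S_{x_j}`, the map `y ↦ k * y` sends `S_{x_j}` to `k` and
permutes its complement, so each element of `X` is hit exactly `m` times when `k` runs through
`S_{x_j}`, giving `m • g_s`.
-/

theorem alternating_sum_add_eq_of_cancel {A : Type*} [AddCommGroup A] {n : ℕ}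
    (p : Fin (n + 2)) (F : Fin (n + 2) → A) (G : Fin (n + 1) → A)
    (hF : ∀ i : Fin (n + 1), i.castSucc < p → F i.castSucc = 0)
    (hG : ∀ i : Fin (n + 1), i.castSucc < p → G i = 0)
    (hFG : ∀ i : Fin (n + 1), p ≤ i.castSucc → F i.succ = G i) :
    ∑ i : Fin (n + 2), (-1 : ℤ) ^ ((i : ℕ) + 1) • F i +
        ∑ i : Fin (n + 1), (-1 : ℤ) ^ ((i : ℕ) + 1) • G i =
      (-1 : ℤ) ^ ((p : ℕ) + 1) • F p := by
  rw [Fin.sum_univ_succAbove _ p, add_assoc, ← Finset.sum_add_distrib, add_eq_left]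
  refine Finset.sum_eq_zero fun i _ => ?_
  rcases lt_or_ge i.castSucc p with hi | hi
  · rw [Fin.succAbove_of_castSucc_lt _ _ hi, hF i hi, hG i hi, smul_zero, smul_zero, add_zero]
  · rw [Fin.succAbove_of_le_castSucc _ _ hi, hFG i hi, Fin.val_succ, pow_succ _ ((i : ℕ) + 1),
      mul_neg_one, neg_smul, neg_add_cancel]

section Tuples

/-- The tuple `(k, …, k, x_{j+1}, …, x_n)` whose first `j` entries equal `k`. -/
def constPrefix {X : Type*} {n : ℕ} (j : ℕ) (k : X) (x : Fin n → X) : Fin n → X :=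
  fun i => if (i : ℕ) < j then k else x i

/-- The tuple `(k, …, k, y, x_{j+1}, …, x_n)` whose first `j` entries equal `k`: the generator
occurring in the chain homotopy `D_n^j`. The entries after `y` are shifted by one place, whence the
index `i - 1`. -/
def constPrefixInsert {X : Type*} {n : ℕ} (j : ℕ) (k y : X) (x : Fin n → X) : Fin (n + 1) → X :=
  fun i => if (i : ℕ) < j then k else if h : j < i then x ⟨i - 1, by omega⟩ else y

variable {X : Type} (op : X → X → X) {n j : ℕ} (k y : X)

theorem constPrefixInsert_congr {x z : Fin n → X} (h : ∀ l : Fin n, j ≤ l → x l = z l) :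
    constPrefixInsert j k y x = constPrefixInsert j k y z := by
  funext l
  unfold constPrefixInsert
  split_ifs with hlt hgt
  · rfl
  · exact h _ (Nat.le_sub_one_of_lt hgt)
  · rfl

theorem dZero_constPrefixInsert_self (hj : j < n + 1) (x : Fin n → X) :
    dZero n ⟨j, hj⟩ (constPrefixInsert j k y x) = constPrefix j k x := by
  funext l
  simp only [dZero, constPrefix, constPrefixInsert, Fin.val_castSucc, Fin.val_succ]
  split_ifs <;> first | rfl | omega

theorem dStar_constPrefixInsert_self (hj : j < n + 1) (x : Fin n → X) :
    dStar op n ⟨j, hj⟩ (constPrefixInsert j k y x) = constPrefix j (op k y) x := by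
  funext l
  simp only [dStar, constPrefix, constPrefixInsert, Fin.val_castSucc, Fin.val_succ]
  split_ifs <;> first | rfl | omega

variable {op k} in
theorem dStar_constPrefixInsert_of_lt (hk : op k k = k) {i : Fin (n + 1)} (hi : (i : ℕ) < j)
    (x : Fin n → X) :
    dStar op n i (constPrefixInsert j k y x) = dZero n i (constPrefixInsert j k y x) := by
  funext l
  simp only [dStar, dZero, constPrefixInsert, Fin.val_castSucc, Fin.val_succ]
  split_ifs <;> first | rfl | exact hk | omega

theorem dZero_succ_constPrefixInsert {i : Fin (n + 1)} (hi : j ≤ i) (x : Fin (n + 1) → X) :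
    dZero (n + 1) i.succ (constPrefixInsert j k y x) = constPrefixInsert j k y (dZero n i x) := by
  funext l
  simp only [dZero, constPrefixInsert, Fin.val_castSucc, Fin.val_succ]
  split_ifs <;> first | rfl | omega | exact congrArg x (Fin.ext (by grind))

theorem dStar_succ_constPrefixInsert {i : Fin (n + 1)} (hi : j ≤ i) (x : Fin (n + 1) → X) :
    dStar op (n + 1) i.succ (constPrefixInsert j k y x) =
      constPrefixInsert j (op k (x i)) (op y (x i)) (dStar op n i x) := by
  have hx : constPrefixInsert j k y x i.succ = x i := by
    simp only [constPrefixInsert, Fin.val_succ]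
    split_ifs <;> first | rfl | omega
  funext l
  simp only [dStar, hx]
  simp only [constPrefixInsert, dStar, Fin.val_castSucc, Fin.val_succ]
  split_ifs <;> first | rfl | omega | exact congrArg x (Fin.ext (by grind))

end Tuples

section Stabilizers

variable {X : Type} [Fintype X] [DecidableEq X] {op : X → X → X}

theorem mem_stabF {a y : X} : y ∈ stabF op a ↔ op a y = a := by
  simp [stabF]

theorem stabF_eq_of_mem (htriv : ∀ a x y, op a x = a → op a y = a → op x y = x) {a k : X}
    (ha : op a a = a) (hk : k ∈ stabF op a) : stabF op k = stabF op a := by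
  rw [mem_stabF] at hk
  have hka : op k a = k := htriv a k a hk ha
  ext y
  rw [mem_stabF, mem_stabF]
  exact ⟨htriv k a y hka, htriv a k y hk⟩

theorem stabF_op (hbij : ∀ b, Function.Bijective fun x => op x b)
    (hdist : ∀ a b c, op (op a b) c = op (op a c) (op b c)) (a b : X) :
    stabF op (op a b) = (stabF op a).map ⟨(op · b), (hbij b).injective⟩ := by
  ext y
  obtain ⟨z, rfl⟩ := (hbij b).surjective y
  simp [mem_stabF, ← hdist, (hbij b).injective.eq_iff]

theorem image_op_compl_stabF {k : X} (hk : op k k = k)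
    (hsol : ∀ b, op k b ≠ k → ∃ x, op k x = b) :
    (stabF op k)ᶜ.image (op k) = (stabF op k)ᶜ := by
  symm
  refine Finset.eq_of_subset_of_card_le (fun b hb => ?_) Finset.card_image_le
  rw [Finset.mem_compl, mem_stabF] at hb
  obtain ⟨x, rfl⟩ := hsol b hb
  refine Finset.mem_image_of_mem _ (Finset.mem_compl.2 fun hx => hb ?_)
  rw [mem_stabF.1 hx, hk]

variable {A : Type*} [AddCommMonoid A]

theorem sum_op_left {k : X} (hk : op k k = k) (hsol : ∀ b, op k b ≠ k → ∃ x, op k x = b)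
    (f : X → A) :
    ∑ y, f (op k y) = (stabF op k).card • f k + ∑ y ∈ (stabF op k)ᶜ, f y := by
  have himage := image_op_compl_stabF hk hsol
  have hinj : Set.InjOn (op k) ((stabF op k)ᶜ : Finset X) :=
    Finset.card_image_iff.1 (congrArg Finset.card himage)
  rw [← Finset.sum_add_sum_compl (stabF op k)]
  congr 1
  · exact Finset.sum_eq_card_nsmul fun y hy => congrArg f (mem_stabF.1 hy)
  · rw [← Finset.sum_image hinj, himage]

theorem sum_stabF_sum_op_left (hidem : ∀ a, op a a = a)
    (hsol : ∀ a b, op a b ≠ a → ∃ x, op a x = b)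
    (htriv : ∀ a x y, op a x = a → op a y = a → op x y = x) (a : X) (f : X → A) :
    ∑ k ∈ stabF op a, ∑ y, f (op k y) = (stabF op a).card • ∑ y, f y :=
  calc ∑ k ∈ stabF op a, ∑ y, f (op k y)
    _ = ∑ k ∈ stabF op a, ((stabF op a).card • f k + ∑ y ∈ (stabF op a)ᶜ, f y) :=
      Finset.sum_congr rfl fun k hk => by
        rw [sum_op_left (hidem k) (hsol k), stabF_eq_of_mem htriv (hidem a) hk]
    _ = (stabF op a).card • (∑ y ∈ stabF op a, f y + ∑ y ∈ (stabF op a)ᶜ, f y) := by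
      rw [Finset.sum_add_distrib, Finset.sum_const, ← Finset.smul_sum, smul_add]
    _ = (stabF op a).card • ∑ y, f y := by rw [Finset.sum_add_sum_compl]

end Stabilizers

section Homotopy

open FreeAbelianGroup

/-- The difference `d_i^{(*_0)} - d_i^{(*)}` of the two `i`-th face maps (`0`-indexed), whose
alternating sum is the rack boundary. -/
def rackFace {X : Type} (op : X → X → X) (n : ℕ) (i : Fin (n + 1)) :
    RackChain X (n + 1) →+ RackChain X n :=
  map (dZero n i) - map (dStar op n i)

theorem rackFace_of {X : Type} (op : X → X → X) (n : ℕ) (i : Fin (n + 1)) (x : Fin (n + 1) → X) :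
    rackFace op n i (of x) = of (dZero n i x) - of (dStar op n i x) := by
  simp only [rackFace, AddMonoidHom.sub_apply, map_of_apply]

theorem rackBoundary_apply {X : Type} (op : X → X → X) (n : ℕ) (c : RackChain X (n + 1)) :
    rackBoundary op n c = ∑ i : Fin (n + 1), (-1 : ℤ) ^ ((i : ℕ) + 1) • rackFace op n i c := by
  have hsum : rackBoundary op n =
      ∑ i : Fin (n + 1), (-1 : ℤ) ^ ((i : ℕ) + 1) • rackFace op n i := by
    ext x
    simp [rackBoundary, rackFace_of, AddMonoidHom.finsetSum_apply]
  simp [hsum, AddMonoidHom.finsetSum_apply]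

variable {X : Type} [Fintype X] [DecidableEq X] {op : X → X → X} {n j : ℕ}

theorem Dmap_of (hj : 1 ≤ j) (hjn : j ≤ n) (x : Fin n → X) :
    Dmap op n j (of x) =
      ∑ k ∈ stabF op (x ⟨j - 1, by omega⟩), ∑ y, of (constPrefixInsert j k y x) := by
  rw [Dmap, lift_apply_of, dif_pos ⟨hj, hjn⟩]
  refine Finset.sum_congr rfl fun k _ => Finset.sum_congr rfl fun y _ => congrArg of ?_
  funext l
  unfold constPrefixInsert
  split_ifs <;> first | rfl | omega

theorem Dmap_of_congr {x z : Fin n → X} (h : ∀ l : Fin n, j ≤ (l : ℕ) + 1 → x l = z l) :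
    Dmap op n j (of x) = Dmap op n j (of z) := by
  by_cases hjn : 1 ≤ j ∧ j ≤ n
  · rw [Dmap_of hjn.1 hjn.2, Dmap_of hjn.1 hjn.2, h _ (Nat.le_add_of_sub_le le_rfl)]
    simp only [constPrefixInsert_congr _ _ fun l hl => h l (Nat.le_succ_of_le hl)]
  · simp only [Dmap, lift_apply_of, dif_neg hjn]

theorem g2map_of (hj : 1 ≤ j) (hjn : j ≤ n) (x : Fin n → X) :
    g2map op n j (of x) = ∑ k ∈ stabF op (x ⟨j - 1, by omega⟩), of (constPrefix j k x) := by
  rw [g2map, lift_apply_of, dif_pos ⟨hj, hjn⟩]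
  rfl

theorem gsmap_of (x : Fin n → X) :
    gsmap op n j (of x) = ∑ y, of (constPrefix j y x) := by
  rw [gsmap, lift_apply_of]
  rfl

theorem rackFace_comp_Dmap_of_lt (hidem : ∀ a, op a a = a) (hj : 1 ≤ j) (hjn : j ≤ n)
    (i : Fin (n + 1)) (hi : (i : ℕ) < j) : (rackFace op n i).comp (Dmap op n j) = 0 := by
  ext x
  simp [Dmap_of hj hjn, rackFace_of, dStar_constPrefixInsert_of_lt _ (hidem _) hi]

theorem Dmap_comp_rackFace_of_lt (i : Fin (n + 1)) (hi : (i : ℕ) < j) :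
    (Dmap op n j).comp (rackFace op n i) = 0 := by
  ext x
  have hfaces : Dmap op n j (of (dZero n i x)) = Dmap op n j (of (dStar op n i x)) :=
    Dmap_of_congr fun l hl => by simp only [dZero, dStar, if_neg (show ¬(l : ℕ) < i by omega)]
  simp [rackFace_of, hfaces]

theorem rackFace_succ_comp_Dmap (hbij : ∀ b, Function.Bijective fun x => op x b)
    (hdist : ∀ a b c, op (op a b) c = op (op a c) (op b c)) (hj : 1 ≤ j) (i : Fin (n + 1))
    (hi : j ≤ i) :
    (rackFace op (n + 1) i.succ).comp (Dmap op (n + 1) j) =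
      (Dmap op n j).comp (rackFace op n i) := by
  ext x
  have hjn : j ≤ n := by omega
  have hlt : j - 1 < (i : ℕ) := by omega
  have hzero : dZero n i x ⟨j - 1, by omega⟩ = x ⟨j - 1, by omega⟩ := if_pos hlt
  have hstar : dStar op n i x ⟨j - 1, by omega⟩ = op (x ⟨j - 1, by omega⟩) (x i) := if_pos hlt
  have hreindex (k : X) :
      ∑ y, of (constPrefixInsert j k (op y (x i)) (dStar op n i x)) =
        ∑ y, of (constPrefixInsert j k y (dStar op n i x)) :=
    (hbij (x i)).sum_comp fun y => of (constPrefixInsert j k y (dStar op n i x))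
  simp [Dmap_of hj hjn, Dmap_of hj (Nat.le_succ_of_le hjn), rackFace_of, hzero, hstar,
    stabF_op hbij hdist, dZero_succ_constPrefixInsert _ _ hi,
    dStar_succ_constPrefixInsert _ _ _ hi, hreindex]

theorem rackFace_comp_Dmap_self {m : ℕ} (hidem : ∀ a, op a a = a)
    (hstab : ∀ a, (stabF op a).card = m) (hsol : ∀ a b, op a b ≠ a → ∃ x, op a x = b)
    (htriv : ∀ a x y, op a x = a → op a y = a → op x y = x) (hj : 1 ≤ j) (hjn : j ≤ n) :
    (rackFace op n ⟨j, Nat.lt_succ_of_le hjn⟩).comp (Dmap op n j) =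
      (Fintype.card X : ℤ) • g2map op n j - (m : ℤ) • gsmap op n j := by
  ext x
  have hsum := sum_stabF_sum_op_left hidem hsol htriv (x ⟨j - 1, by omega⟩)
    fun y => of (constPrefix j y x)
  rw [hstab] at hsum
  simp [Dmap_of hj hjn, g2map_of hj hjn, gsmap_of, rackFace_of, dZero_constPrefixInsert_self,
    dStar_constPrefixInsert_self, hsum, Finset.smul_sum]

end Homotopy

/-- For a finite `m`-almost quasigroup quandle `X` with all
stabilizers trivial subquandles,
`∂_{n+1}∘D_n^j + D_{n-1}^j∘∂_n = (−1)^{j+1}(|X|·g_2^j − m·g_s^j)`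
as maps `C_n^R(X) → C_n^R(X)` (for `1 ≤ j ≤ n`). -/
theorem mAQ_Dmap_homotopy
    {X : Type} [Fintype X] [DecidableEq X] (op : X → X → X) (m : ℕ)
    (hm : 1 ≤ m)
    (hidem : ∀ a : X, op a a = a)
    (hbij : ∀ b : X, Function.Bijective fun x => op x b)
    (hdist : ∀ a b c : X, op (op a b) c = op (op a c) (op b c))
    (hstab : ∀ a : X, (stabF op a).card = m)
    (hsol : ∀ a b : X, op a b ≠ a → ∃! x : X, op a x = b)
    (htriv : ∀ a x y : X, op a x = a → op a y = a → op x y = x) :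
    ∀ (n j : ℕ), 1 ≤ j → j ≤ n + 1 →
      ∀ c : RackChain X (n + 1),
        rackBoundary op (n + 1) (Dmap op (n + 1) j c)
            + Dmap op n j (rackBoundary op n c)
          = ((-1 : ℤ) ^ (j + 1)) •
              ((Fintype.card X : ℤ) • g2map op (n + 1) j c
                - (m : ℤ) • gsmap op (n + 1) j c) := by
  intro n j hj hjn c
  simp only [rackBoundary_apply, map_sum, map_zsmul]
  rw [alternating_sum_add_eq_of_cancel ⟨j, Nat.lt_succ_of_le hjn⟩
    (fun i => rackFace op (n + 1) i (Dmap op (n + 1) j c))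
    (fun i => Dmap op n j (rackFace op n i c))]
  · exact congrArg _ <| DFunLike.congr_fun (rackFace_comp_Dmap_self hidem hstab
      (fun a b hb => (hsol a b hb).exists) htriv hj hjn) c
  · exact fun i hi =>
      DFunLike.congr_fun (rackFace_comp_Dmap_of_lt hidem hj hjn i.castSucc hi) c
  · exact fun i hi => DFunLike.congr_fun (Dmap_comp_rackFace_of_lt i hi) c
  · exact fun i hi => DFunLike.congr_fun (rackFace_succ_comp_Dmap hbij hdist hj i hi) c
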